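/- Let X be a complex Hilbert space, let T ∈ B(X) be power-bounded, let x ∈ X, and let a ∈ ℓ¹(ℕ). If â(λ) = 0 for every λ in the unitary local spectrum Spu(T;x) of T at x, then ‖Tⁿ â(T) x‖ → 0 as n → ∞. (ℤ₊-instance of Theorem 5.1 of the paper.) -/

import Mathlib

open Filter Topology

/-- `λ ∈ 𝕋` is locally regular at `x` for the operator `T`: there exist finitely many
`a₁,…,aₙ ∈ ℓ¹(ℕ)`, an open neighbourhood `Ω ⊆ ℂⁿ` of `(â₁(λ),…,âₙ(λ))`, and holomorphic
functions `g₁,…,gₙ : Ω → X` with `∑ₖ (μₖ·I − âₖ(T)) gₖ(μ) = x` for all `μ ∈ Ω`. -/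
def LocallyRegular {X : Type*} [NormedAddCommGroup X] [NormedSpace ℂ X] [CompleteSpace X]
    (T : X →L[ℂ] X) (x : X) (lam : ℂ) : Prop :=
  ∃ (n : ℕ) (a : Fin n → ℕ → ℂ),
    (∀ k, Summable fun m : ℕ => ‖a k m‖) ∧
    ∃ Ω : Set (Fin n → ℂ), IsOpen Ω ∧ (fun k => ∑' m : ℕ, a k m * lam ^ m) ∈ Ω ∧
      ∃ g : Fin n → (Fin n → ℂ) → X,
        (∀ k, AnalyticOnNhd ℂ (g k) Ω) ∧
        ∀ μ ∈ Ω, ∑ k : Fin n, (μ k • g k μ - (∑' m : ℕ, a k m • T ^ m) (g k μ)) = x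


/-- Cesàro averages. -/
noncomputable def cesAvg (c : ℕ → ℂ) (N : ℕ) : ℂ :=
  ((N : ℂ) + 1)⁻¹ * ∑ n ∈ Finset.range (N + 1), c n

/-- A Banach limit: limit of the Cesàro averages along an ultrafilter. -/
noncomputable def cesLim (c : ℕ → ℂ) : ℂ :=
  limUnder ((hyperfilter ℕ : Ultrafilter ℕ) : Filter ℕ) (cesAvg c)

lemma cesAvg_norm_le {c : ℕ → ℂ} {M : ℝ} (h : ∀ n, ‖c n‖ ≤ M) (N : ℕ) : ‖cesAvg c N‖ ≤ M := by
  unfold cesAvg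
  have h1 : ‖∑ n ∈ Finset.range (N + 1), c n‖ ≤ (N + 1) * M := by
    refine (norm_sum_le _ _).trans ((Finset.sum_le_sum fun n _ => h n).trans ?_)
    simp
  have h2 : ‖((N : ℂ) + 1)‖ = (N : ℝ) + 1 := by
    have : ((N : ℂ) + 1) = ((N + 1 : ℕ) : ℂ) := by push_cast; rfl
    rw [this, Complex.norm_natCast]; push_cast; rfl
  rw [norm_mul, norm_inv, h2, inv_mul_le_iff₀ (by positivity)]
  exact h1

lemma cesLim_tendsto {c : ℕ → ℂ} {M : ℝ} (h : ∀ n, ‖c n‖ ≤ M) :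
    Tendsto (cesAvg c) ((hyperfilter ℕ : Ultrafilter ℕ) : Filter ℕ) (𝓝 (cesLim c)) := by
  have hK : IsCompact (Metric.closedBall (0 : ℂ) M) := isCompact_closedBall _ _
  obtain ⟨z, -, hz⟩ := hK.ultrafilter_le_nhds ((hyperfilter ℕ).map (cesAvg c)) (by
    simp only [le_principal_iff, Ultrafilter.coe_map, mem_map]
    exact Filter.univ_mem' fun N => by simpa using cesAvg_norm_le h N)
  exact tendsto_nhds_limUnder ⟨z, hz⟩

lemma cesLim_eq {c : ℕ → ℂ} {z : ℂ}
    (h : Tendsto (cesAvg c) ((hyperfilter ℕ : Ultrafilter ℕ) : Filter ℕ) (𝓝 z)) :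
    cesLim c = z := h.limUnder_eq

lemma cesLim_shift {c : ℕ → ℂ} {M : ℝ} (h : ∀ n, ‖c n‖ ≤ M) :
    cesLim (fun n => c (n + 1)) = cesLim c := by
  apply cesLim_eq
  have h1 := cesLim_tendsto h
  have h2 : Tendsto (fun N : ℕ => ((N : ℂ) + 1)⁻¹ * (c (N + 1) - c 0))
      ((hyperfilter ℕ : Ultrafilter ℕ) : Filter ℕ) (𝓝 0) := by
    refine Tendsto.mono_left ?_ Nat.hyperfilter_le_atTop
    have h3 : Tendsto (fun N : ℕ => ((N : ℝ) + 1)⁻¹ * (M + M)) atTop (𝓝 0) := by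
      have := (tendsto_one_div_add_atTop_nhds_zero_nat (𝕜 := ℝ)).mul_const (M + M)
      simpa using this
    refine squeeze_zero_norm (fun N => ?_) h3
    have h2 : ‖((N : ℂ) + 1)‖ = (N : ℝ) + 1 := by
      have : ((N : ℂ) + 1) = ((N + 1 : ℕ) : ℂ) := by push_cast; rfl
      rw [this, Complex.norm_natCast]; push_cast; rfl
    rw [norm_mul, norm_inv, h2]
    gcongr
    exact (norm_sub_le _ _).trans (add_le_add (h _) (h _))
  have h3 := h1.add h2
  rw [add_zero] at h3
  refine h3.congr fun N => ?_
  simp only [cesAvg]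
  rw [← mul_add]
  congr 1
  rw [Finset.sum_range_succ', Finset.sum_range_succ (fun n => c (n + 1))]
  ring

/-- Bounded sequences. -/
def bddSeq (X : Type*) [NormedAddCommGroup X] [InnerProductSpace ℂ X] : Submodule ℂ (ℕ → X) where
  carrier := {s | ∃ M : ℝ, ∀ n, ‖s n‖ ≤ M}
  add_mem' := by
    rintro s t ⟨M, hM⟩ ⟨N, hN⟩
    exact ⟨M + N, fun n => (norm_add_le _ _).trans (add_le_add (hM n) (hN n))⟩
  zero_mem' := ⟨0, fun n => by simp⟩
  smul_mem' := by
    rintro c s ⟨M, hM⟩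
    exact ⟨‖c‖ * M, fun n => by
      rw [Pi.smul_apply, norm_smul]; exact mul_le_mul_of_nonneg_left (hM n) (norm_nonneg _)⟩

/-- Type synonym for the bounded sequences. -/
structure BSeq (X : Type*) [NormedAddCommGroup X] [InnerProductSpace ℂ X] where
  /-- the sequence -/
  val : bddSeq X

section
variable {X : Type*} [NormedAddCommGroup X] [InnerProductSpace ℂ X]

/-- the trivial equivalence -/
def BSeq.equiv : BSeq X ≃ bddSeq X := ⟨BSeq.val, BSeq.mk, fun _ => rfl, fun _ => rfl⟩

instance : AddCommGroup (BSeq X) := BSeq.equiv.addCommGroup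
instance : Module ℂ (BSeq X) := BSeq.equiv.module ℂ

/-- Evaluation. -/
def BSeq.ev (s : BSeq X) (n : ℕ) : X := s.val.1 n

lemma BSeq.ev_add (s t : BSeq X) (n : ℕ) : (s + t).ev n = s.ev n + t.ev n := rfl
lemma BSeq.ev_smul (c : ℂ) (s : BSeq X) (n : ℕ) : (c • s).ev n = c • s.ev n := rfl
lemma BSeq.ev_sub (s t : BSeq X) (n : ℕ) : (s - t).ev n = s.ev n - t.ev n := rfl
lemma BSeq.bdd (s : BSeq X) : ∃ M : ℝ, ∀ n, ‖s.ev n‖ ≤ M := s.val.2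
lemma BSeq.ext' {s t : BSeq X} (h : ∀ n, s.ev n = t.ev n) : s = t := by
  cases s; cases t; congr; ext n; exact h n

/-- Constructor. -/
def BSeq.of (s : ℕ → X) (h : ∃ M : ℝ, ∀ n, ‖s n‖ ≤ M) : BSeq X := ⟨⟨s, h⟩⟩
lemma BSeq.ev_of (s : ℕ → X) (h : ∃ M : ℝ, ∀ n, ‖s n‖ ≤ M) (n : ℕ) : (BSeq.of s h).ev n = s n := rfl

lemma BSeq.inner_bdd (s t : BSeq X) : ∃ M : ℝ, ∀ n, ‖inner ℂ (s.ev n) (t.ev n)‖ ≤ M := by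
  obtain ⟨M, hM⟩ := s.bdd
  obtain ⟨N, hN⟩ := t.bdd
  exact ⟨M * N, fun n => (norm_inner_le_norm _ _).trans
    (mul_le_mul (hM n) (hN n) (norm_nonneg _) ((norm_nonneg _).trans (hM n)))⟩

/-- inner product -/
noncomputable def BSeq.ip (s t : BSeq X) : ℂ := cesLim fun n => inner ℂ (s.ev n) (t.ev n)

lemma BSeq.ip_tendsto (s t : BSeq X) : Tendsto (cesAvg fun n => inner ℂ (s.ev n) (t.ev n))
    ((hyperfilter ℕ : Ultrafilter ℕ) : Filter ℕ) (𝓝 (s.ip t)) := by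
  obtain ⟨M, hM⟩ := s.inner_bdd t
  exact cesLim_tendsto hM

lemma cesAvg_re_self (s : BSeq X) (N : ℕ) :
    (cesAvg (fun n => inner ℂ (s.ev n) (s.ev n)) N).re
      = ((N : ℝ) + 1)⁻¹ * ∑ n ∈ Finset.range (N + 1), ‖s.ev n‖ ^ 2 := by
  have : cesAvg (fun n => inner ℂ (s.ev n) (s.ev n)) N
      = ((((N : ℝ) + 1)⁻¹ * ∑ n ∈ Finset.range (N + 1), ‖s.ev n‖ ^ 2 : ℝ) : ℂ) := by
    simp only [cesAvg, inner_self_eq_norm_sq_to_K]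
    push_cast
    rfl
  rw [this, Complex.ofReal_re]

noncomputable instance BSeq.core : PreInnerProductSpace.Core ℂ (BSeq X) where
  inner := BSeq.ip
  conj_inner_symm s t := by
    symm
    apply cesLim_eq
    refine ((Complex.continuous_conj.tendsto _).comp (t.ip_tendsto s)).congr fun N => ?_
    simp [cesAvg]
  re_inner_nonneg s := by
    have h := (Complex.continuous_re.tendsto _).comp (s.ip_tendsto s)
    refine ge_of_tendsto' h fun N => ?_
    simp only [Function.comp]
    rw [cesAvg_re_self]
    positivity
  add_left s t u := by
    apply cesLim_eq
    refine ((s.ip_tendsto u).add (t.ip_tendsto u)).congr fun N => ?_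
    simp [cesAvg, BSeq.ev_add, Finset.sum_add_distrib, mul_add]
  smul_left s t r := by
    apply cesLim_eq
    refine ((s.ip_tendsto t).const_mul _).congr fun N => ?_
    simp only [cesAvg, BSeq.ev_smul, inner_smul_left, ← Finset.mul_sum]
    ring

noncomputable instance : SeminormedAddCommGroup (BSeq X) :=
  InnerProductSpace.Core.toSeminormedAddCommGroup (𝕜 := ℂ)
noncomputable instance : InnerProductSpace ℂ (BSeq X) := InnerProductSpace.ofCore BSeq.core

lemma BSeq.inner_eq (s t : BSeq X) : inner ℂ s t = s.ip t := rfl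

lemma BSeq.norm_sq (s : BSeq X) : ‖s‖ ^ 2 = (s.ip s).re := by
  rw [← BSeq.inner_eq, ← inner_self_eq_norm_sq (𝕜 := ℂ) s]; rfl

lemma BSeq.norm_sq_tendsto (s : BSeq X) : Tendsto
    (fun N : ℕ => ((N : ℝ) + 1)⁻¹ * ∑ n ∈ Finset.range (N + 1), ‖s.ev n‖ ^ 2)
    ((hyperfilter ℕ : Ultrafilter ℕ) : Filter ℕ) (𝓝 (‖s‖ ^ 2)) := by
  rw [s.norm_sq]
  exact ((Complex.continuous_re.tendsto _).comp (s.ip_tendsto s)).congr fun N => cesAvg_re_self s N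

lemma BSeq.norm_le {s : BSeq X} {M : ℝ} (h : ∀ n, ‖s.ev n‖ ≤ M) : ‖s‖ ≤ M := by
  have hM : 0 ≤ M := (norm_nonneg _).trans (h 0)
  refine (sq_le_sq₀ (norm_nonneg _) hM).1 ?_
  refine le_of_tendsto' s.norm_sq_tendsto fun N => ?_
  rw [inv_mul_le_iff₀ (by positivity)]
  refine (Finset.sum_le_sum fun n _ => pow_le_pow_left₀ (norm_nonneg _) (h n) 2).trans ?_
  simp

lemma BSeq.le_norm {s : BSeq X} {M : ℝ} (hM : 0 ≤ M) (h : ∀ n, M ≤ ‖s.ev n‖) : M ≤ ‖s‖ := by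
  refine (sq_le_sq₀ hM (norm_nonneg _)).1 ?_
  refine ge_of_tendsto' s.norm_sq_tendsto fun N => ?_
  rw [le_inv_mul_iff₀ (by positivity)]
  refine le_trans ?_ (Finset.sum_le_sum fun n _ => pow_le_pow_left₀ hM (h n) 2)
  simp

/-- left shift -/
def BSeq.shiftFun (s : BSeq X) : BSeq X :=
  BSeq.of (fun n => s.ev (n + 1)) (s.bdd.imp fun _ h _ => h _)

lemma BSeq.shiftFun_norm (s : BSeq X) : ‖s.shiftFun‖ = ‖s‖ := by
  have h1 : s.shiftFun.ip s.shiftFun = s.ip s := by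
    obtain ⟨M, hM⟩ := s.inner_bdd s
    have h3 := cesLim_shift (c := fun n => inner ℂ (s.ev n) (s.ev n)) hM
    unfold BSeq.ip
    simp only [BSeq.shiftFun, BSeq.ev_of]
    exact h3
  have h2 : ‖s.shiftFun‖ ^ 2 = ‖s‖ ^ 2 := by rw [BSeq.norm_sq, BSeq.norm_sq, h1]
  exact (pow_left_inj₀ (norm_nonneg _) (norm_nonneg _) two_ne_zero).1 h2

/-- left shift as a linear isometry -/
noncomputable def BSeq.shift : BSeq X →ₗᵢ[ℂ] BSeq X where
  toFun := BSeq.shiftFun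
  map_add' _ _ := rfl
  map_smul' _ _ := rfl
  norm_map' := BSeq.shiftFun_norm

lemma BSeq.shift_ev (s : BSeq X) (n : ℕ) : (BSeq.shift s).ev n = s.ev (n + 1) := rfl

lemma BSeq.shift_surj : Function.Surjective (BSeq.shift (X := X)) := by
  intro s
  obtain ⟨M, hM⟩ := s.bdd
  refine ⟨BSeq.of (fun n => s.ev (n - 1)) ⟨M, fun n => hM _⟩, BSeq.ext' fun n => ?_⟩
  rw [BSeq.shift_ev, BSeq.ev_of]
  rfl

end

open UniformSpace in
lemma exists_unitary_model {X : Type*} [NormedAddCommGroup X] [InnerProductSpace ℂ X]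
    (T : X →L[ℂ] X) (hT : ∃ M : ℝ, ∀ n : ℕ, ‖T ^ n‖ ≤ M) :
    ∃ (U : Completion (BSeq X) →L[ℂ] Completion (BSeq X)) (Q : X →L[ℂ] Completion (BSeq X)),
      U ∈ unitary (Completion (BSeq X) →L[ℂ] Completion (BSeq X)) ∧
      (∀ x, Q (T x) = U (Q x)) ∧
      ∀ x, Q x = 0 → Tendsto (fun n : ℕ => ‖(T ^ n) x‖) atTop (𝓝 0) := by
  obtain ⟨M, hM⟩ := hT
  have hM0 : 0 ≤ M := (norm_nonneg _).trans (hM 0)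
  have hle : ∀ x n, ‖(T ^ n) x‖ ≤ M * ‖x‖ := fun x n =>
    ((T ^ n).le_opNorm x).trans (mul_le_mul_of_nonneg_right (hM n) (norm_nonneg _))
  let Q0 : X →ₗ[ℂ] BSeq X :=
    { toFun := fun x => BSeq.of (fun n => (T ^ n) x) ⟨M * ‖x‖, hle x⟩
      map_add' := fun x y => BSeq.ext' fun n => by simp [BSeq.ev_of, BSeq.ev_add]
      map_smul' := fun c x => BSeq.ext' fun n => by simp [BSeq.ev_of, BSeq.ev_smul] }
  have hQ0 : ∀ x n, (Q0 x).ev n = (T ^ n) x := fun x n => rfl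
  let Q1 : X →L[ℂ] BSeq X := Q0.mkContinuous M fun x => BSeq.norm_le fun n => by
    rw [hQ0]; exact hle x n
  have hQ1 : ∀ x, Q1 x = Q0 x := fun x => rfl
  let J : BSeq X →L[ℂ] Completion (BSeq X) := Completion.toComplL
  have hJ : ∀ s, J s = (s : Completion (BSeq X)) := fun s => rfl
  have hJd : DenseRange J := Completion.denseRange_coe
  have hJu : IsUniformInducing J := Completion.isUniformInducing_coe _
  let S : BSeq X →L[ℂ] BSeq X := BSeq.shift.toContinuousLinearMap
  have hS : ∀ s, S s = BSeq.shift s := fun s => rfl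
  let U : Completion (BSeq X) →L[ℂ] Completion (BSeq X) := (J.comp S).extend J
  have hU : ∀ s, U (J s) = J (S s) := fun s => ContinuousLinearMap.extend_eq _ hJd hJu s
  have hUn : ∀ w, ‖U w‖ = ‖w‖ := by
    intro w
    induction w using hJd.induction_on with
    | hp => exact isClosed_eq (by fun_prop) (by fun_prop)
    | ih s => 
      rw [hU, hJ, hJ, Completion.norm_coe, Completion.norm_coe, hS, LinearIsometry.norm_map]
  have hUs : Function.Surjective U := by
    have hcl : IsClosed (Set.range U) :=
      (AddMonoidHomClass.isometry_of_norm U hUn).isClosedEmbedding.isClosed_range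
    intro w
    induction w using hJd.induction_on with
    | hp => exact hcl
    | ih s => 
      obtain ⟨t, rfl⟩ := BSeq.shift_surj s
      exact ⟨J t, hU t⟩
  refine ⟨U, J.comp Q1, ?_, ?_, ?_⟩
  · let e : Completion (BSeq X) ≃ₗᵢ[ℂ] Completion (BSeq X) :=
      LinearIsometryEquiv.ofSurjective ⟨U.toLinearMap, hUn⟩ hUs
    have h1 := (Unitary.linearIsometryEquiv.symm e).2
    have h2 : ((Unitary.linearIsometryEquiv.symm e :
        unitary (Completion (BSeq X) →L[ℂ] Completion (BSeq X))) :
        Completion (BSeq X) →L[ℂ] Completion (BSeq X)) = U := by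
      ext w
      rfl
    rwa [h2] at h1
  · intro x
    rw [ContinuousLinearMap.comp_apply, ContinuousLinearMap.comp_apply, hU]
    refine congrArg J ?_
    refine BSeq.ext' fun n => ?_
    rw [hS, BSeq.shift_ev, hQ1, hQ1, hQ0, hQ0, pow_succ]
    rfl
  · intro x hx
    have hx0 : ‖Q0 x‖ = 0 := by
      rw [← hQ1, ← Completion.norm_coe, ← hJ]
      simpa using hx
    rw [Metric.tendsto_atTop]
    intro ε hε
    have : ∃ n, ‖(T ^ n) x‖ < ε / (M + 1) := by
      by_contra! hcon
      have h1 := BSeq.le_norm (s := Q0 x) (M := ε / (M + 1)) (by positivity) hcon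
      rw [hx0] at h1
      have : 0 < ε / (M + 1) := by positivity
      linarith
    obtain ⟨n, hn⟩ := this
    refine ⟨n, fun m hm => ?_⟩
    obtain ⟨k, rfl⟩ := Nat.exists_eq_add_of_le' hm
    rw [pow_add, mul_apply_eq_comp, Real.dist_eq, sub_zero, abs_of_nonneg (norm_nonneg _)]
    refine (hle _ _).trans_lt ?_
    rw [lt_div_iff₀ (by positivity)] at hn
    nlinarith [norm_nonneg ((T ^ n) x)]

/-- Weighted sums of values of an analytic function, through its power series. -/
lemma pow_series_bound {K H : Type*} [TopologicalSpace K] [CompactSpace K]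
    [NormedAddCommGroup H] [NormedSpace ℂ H]
    (Ψ : C(K, ℂ) →ₗ[ℂ] (H →L[ℂ] H)) (hΨ : ∀ f, ‖Ψ f‖ ≤ ‖f‖)
    {n : ℕ} (g : (Fin n → ℂ) → H) (p : FormalMultilinearSeries ℂ (Fin n → ℂ) H)
    (μ0 : Fin n → ℂ) {r : ℝ} (hr : 0 ≤ r)
    (hp : ∀ v : Fin n → ℂ, ‖v‖ ≤ r → HasSum (fun m => p m fun _ => v) (g (μ0 + v)))
    (hs : Summable fun m => ‖p m‖ * (n * r) ^ m)
    {J : Type*} [Fintype J] (F : J → C(K, ℂ)) (v : J → Fin n → ℂ) (hv : ∀ j, ‖v j‖ ≤ r) (ω : ℝ)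
    (hF : ∀ (α : J → ℂ) (A : ℝ), 0 ≤ A → (∀ j, ‖α j‖ ≤ A) → ‖∑ j, α j • F j‖ ≤ ω * A) :
    ‖∑ j, Ψ (F j) (g (μ0 + v j))‖ ≤ ω * ∑' m, ‖p m‖ * (n * r) ^ m := by
  have h1 : HasSum (fun m => ∑ j, Ψ (F j) (p m fun _ => v j)) (∑ j, Ψ (F j) (g (μ0 + v j))) :=
    hasSum_sum fun j _ => (Ψ (F j)).hasSum (hp (v j) (hv j))
  have h2 : ∀ m, ‖∑ j, Ψ (F j) (p m fun _ => v j)‖ ≤ ω * (‖p m‖ * (n * r) ^ m) := by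
    intro m
    have hexp : ∀ j, (p m fun _ => v j)
        = ∑ i : Fin m → Fin n, (∏ l, v j (i l)) • p m (fun l => Pi.single (i l) (1 : ℂ)) := by
      intro j
      have e1 : (fun _ : Fin m => v j)
          = fun _ : Fin m => ∑ k : Fin n, v j k • (Pi.single k (1 : ℂ) : Fin n → ℂ) := by
        funext _
        exact pi_eq_sum_univ' (v j)
      rw [e1, ContinuousMultilinearMap.map_sum]
      refine Finset.sum_congr rfl fun i _ => ?_
      exact ContinuousMultilinearMap.map_smul_univ _ _ _
    have hsw : ∑ j, Ψ (F j) (p m fun _ => v j)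
        = ∑ i : Fin m → Fin n, Ψ (∑ j, (∏ l, v j (i l)) • F j)
            (p m (fun l => Pi.single (i l) (1 : ℂ))) := by
      simp_rw [hexp, map_sum, map_smul, _root_.sum_apply,
        _root_.smul_apply]
      exact Finset.sum_comm
    rw [hsw]
    have hterm : ∀ i : Fin m → Fin n, ‖Ψ (∑ j, (∏ l, v j (i l)) • F j)
            (p m (fun l => Pi.single (i l) (1 : ℂ)))‖ ≤ ω * r ^ m * ‖p m‖ := by
      intro i
      have b1 : ‖Ψ (∑ j, (∏ l, v j (i l)) • F j)‖ ≤ ω * r ^ m := by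
        refine (hΨ _).trans (hF _ _ (by positivity) fun j => ?_)
        rw [norm_prod]
        calc ∏ l, ‖v j (i l)‖ ≤ ∏ _l : Fin m, r :=
              Finset.prod_le_prod (fun _ _ => norm_nonneg _)
                fun l _ => (norm_le_pi_norm (v j) (i l)).trans (hv j)
          _ = r ^ m := by simp
      have b2 : ‖p m (fun l => (Pi.single (i l) (1 : ℂ) : Fin n → ℂ))‖ ≤ ‖p m‖ := by
        refine ((p m).le_opNorm _).trans ?_
        refine mul_le_of_le_one_right (norm_nonneg _) (Finset.prod_le_one (fun _ _ => norm_nonneg _)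
          fun l _ => ?_)
        rw [Pi.norm_single]; simp
      exact (ContinuousLinearMap.le_opNorm _ _).trans
        (mul_le_mul b1 b2 (norm_nonneg _) ((norm_nonneg _).trans b1))
    refine (norm_sum_le _ _).trans ((Finset.sum_le_sum fun i _ => hterm i).trans (le_of_eq ?_))
    simp [mul_pow]
    ring
  rw [← tsum_mul_left]
  refine h1.tsum_eq ▸ tsum_of_norm_bounded (hs.mul_left ω).hasSum h2

lemma local_vanish {K H : Type*} [TopologicalSpace K] [CompactSpace K] [T2Space K]
    [NormedAddCommGroup H] [NormedSpace ℂ H] 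
    (Ψ : C(K, ℂ) →ₐ[ℂ] (H →L[ℂ] H)) (hΨ : ∀ f, ‖Ψ f‖ ≤ ‖f‖)
    {n : ℕ} (b : Fin n → C(K, ℂ)) (ζ0 : K) (Ω : Set (Fin n → ℂ)) (hΩ : IsOpen Ω)
    (hζ : (fun k => b k ζ0) ∈ Ω) (g : Fin n → (Fin n → ℂ) → H)
    (hg : ∀ k, AnalyticOnNhd ℂ (g k) Ω) (y : H)
    (hy : ∀ μ ∈ Ω, ∑ k, (μ k • g k μ - Ψ (b k) (g k μ)) = y) :
    ∃ f : C(K, ℂ), f ζ0 ≠ 0 ∧ Ψ f y = 0 := by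
  set μ0 : Fin n → ℂ := fun k => b k ζ0 with hμ0
  let B : K → Fin n → ℂ := fun ζ k => b k ζ
  have hB : Continuous B := continuous_pi fun k => (b k).continuous
  -- power series
  choose p hp using fun k => hg k μ0 hζ
  have hev : ∀ᶠ R : ENNReal in 𝓝[>] 0, ∀ k, HasFPowerSeriesOnBall (g k) (p k) μ0 R :=
    eventually_all.2 fun k => (hp k).eventually
  obtain ⟨ε, hε, hεΩ⟩ := Metric.isOpen_iff.1 hΩ μ0 hζ
  have hev2 : ∀ᶠ R : ENNReal in 𝓝[>] 0, R < ENNReal.ofReal ε :=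
    nhdsWithin_le_nhds (Iio_mem_nhds (by simpa using hε))
  obtain ⟨R, ⟨hR, hRε⟩, hR0⟩ := ((hev.and hev2).and self_mem_nhdsWithin).exists
  have hRtop : R ≠ ⊤ := (hRε.trans_le le_top).ne
  have hR0' : 0 < R.toReal := ENNReal.toReal_pos (ne_of_gt hR0) hRtop
  have hRε' : R.toReal < ε := by
    have := (ENNReal.toReal_lt_toReal hRtop ENNReal.ofReal_ne_top).2 hRε
    rwa [ENNReal.toReal_ofReal hε.le] at this
  set r : ℝ := R.toReal / (n + 2) with hr
  have hr0 : 0 < r := by positivity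
  have hrR : r < R.toReal := by
    rw [hr, div_lt_iff₀ (by positivity)]
    nlinarith [(Nat.cast_nonneg n : (0:ℝ) ≤ n)]
  have hnrR : n * r < R.toReal := by
    rw [hr, mul_div_assoc', div_lt_iff₀ (by positivity)]
    nlinarith
  have hsum : ∀ k, ∀ v : Fin n → ℂ, ‖v‖ ≤ r → HasSum (fun m => p k m fun _ => v) (g k (μ0 + v)) := by
    intro k v hv
    apply (hR k).hasSum
    rw [← ENNReal.ofReal_toReal hRtop, Metric.eball_ofReal, mem_ball_zero_iff]
    linarith
  have hs : ∀ k, Summable fun m => ‖p k m‖ * (n * r) ^ m := by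
    intro k
    have hnn : 0 ≤ n * r := by positivity
    have := (p k).summable_norm_mul_pow (r := (n * r).toNNReal) (by
      refine lt_of_lt_of_le ?_ (hR k).r_le
      exact (ENNReal.ofReal_lt_iff_lt_toReal hnn hRtop).2 hnrR)
    rwa [Real.coe_toNNReal _ hnn] at this
  -- the bump function
  let f : C(K, ℂ) := ⟨fun ζ => ((max 0 (r / 2 - ‖B ζ - μ0‖) : ℝ) : ℂ), by fun_prop⟩
  have hf : ∀ ζ, f ζ = ((max 0 (r / 2 - ‖B ζ - μ0‖) : ℝ) : ℂ) := fun ζ => rfl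
  have hfn : ∀ ζ, ‖f ζ‖ ≤ r := by
    intro ζ
    rw [hf, Complex.norm_real, Real.norm_of_nonneg (le_max_left _ _)]
    exact max_le hr0.le (by linarith [norm_nonneg (B ζ - μ0)])
  let S : Set K := {ζ | ‖B ζ - μ0‖ ≤ r / 2}
  have hSc : IsClosed S := isClosed_le (by fun_prop) continuous_const
  have hfS : ∀ ζ, ζ ∉ S → f ζ = 0 := by
    intro ζ h
    have h : ¬ ‖B ζ - μ0‖ ≤ r / 2 := h
    rw [hf, max_eq_left (by linarith)]; simp
  refine ⟨f, ?_, ?_⟩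
  · have : B ζ0 = μ0 := rfl
    rw [hf, this, sub_self, norm_zero, sub_zero, max_eq_right (by positivity)]
    exact_mod_cast (by positivity : r / 2 ≠ 0)
  set C : ℝ := ∑ k, ∑' m, ‖p k m‖ * (n * r) ^ m with hC
  have key : ∀ ω : ℝ, 0 < ω → ‖Ψ f y‖ ≤ ω * (r * C) := by
    intro ω hω
    obtain ⟨t, ht, hcov⟩ := hSc.isCompact.elim_nhds_subcover (fun ζ => {ξ | ‖B ξ - B ζ‖ < ω})
      (fun ζ _ => (isOpen_lt (by fun_prop) continuous_const).mem_nhds (by simpa using hω))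
    obtain ⟨ρ, hρ⟩ := PartitionOfUnity.exists_isSubordinate hSc
      (fun ζ : t => {ξ | ‖B ξ - B ζ‖ < ω}) (fun ζ => isOpen_lt (by fun_prop) continuous_const)
      (by intro ξ hξ
          obtain ⟨ζ, hζ, h⟩ := Set.mem_iUnion₂.1 (hcov hξ)
          exact Set.mem_iUnion.2 ⟨⟨ζ, hζ⟩, h⟩)
    have hρ1 : ∀ ξ ∈ S, ∑ j, ρ j ξ = 1 := fun ξ hξ => by
      rw [← finsum_eq_sum_of_fintype]; exact ρ.sum_eq_one hξ
    have hρ2 : ∀ ξ, ∑ j, ρ j ξ ≤ 1 := fun ξ => by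
      rw [← finsum_eq_sum_of_fintype]; exact ρ.sum_le_one ξ
    have hρ3 : ∀ j ξ, ρ j ξ ≠ 0 → ‖B ξ - B j‖ < ω := fun j ξ h =>
      hρ j (subset_tsupport _ h)
    let ρc : t → C(K, ℂ) := fun j => ⟨fun ξ => ((ρ j ξ : ℝ) : ℂ), by fun_prop⟩
    have hρc : ∀ j ξ, ρc j ξ = ((ρ j ξ : ℝ) : ℂ) := fun _ _ => rfl
    let F : Fin n → t → C(K, ℂ) := fun k j => ρc j * f * (algebraMap ℂ C(K, ℂ) (B j k) - b k)
    have hFa : ∀ k j ξ, F k j ξ = (ρ j ξ : ℂ) * f ξ * (B j k - b k ξ) := fun _ _ _ => rfl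
    have hfsum : f = ∑ j, ρc j * f := by
      ext ξ
      rw [ContinuousMap.sum_apply]
      simp only [ContinuousMap.mul_apply, hρc, ← Finset.sum_mul]
      by_cases hξ : ξ ∈ S
      · rw [← Complex.ofReal_sum, hρ1 ξ hξ]; simp
      · rw [hfS ξ hξ]; simp
    have hBj : ∀ j : t, ‖B j - μ0‖ ≤ r := fun j => by
      have : ‖B j - μ0‖ ≤ r / 2 := ht j j.2
      linarith
    have hexp : Ψ f y = ∑ k, ∑ j, Ψ (F k j) (g k (μ0 + (B j - μ0))) := by
      conv_lhs => rw [hfsum]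
      rw [map_sum, _root_.sum_apply, Finset.sum_comm]
      refine Finset.sum_congr rfl fun j _ => ?_
      have hmem : B j ∈ Ω := hεΩ (by
        rw [mem_ball_iff_norm]; linarith [hBj j])
      rw [← hy (B j) hmem, map_sum]
      refine Finset.sum_congr rfl fun k _ => ?_
      rw [add_sub_cancel]
      simp only [F, map_mul, map_sub, AlgHom.commutes]
      simp [Algebra.algebraMap_eq_smul_one]
    rw [hexp, hC, Finset.mul_sum, Finset.mul_sum]
    refine (norm_sum_le _ _).trans (Finset.sum_le_sum fun k _ => ?_)
    rw [← mul_assoc]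
    refine pow_series_bound Ψ.toLinearMap hΨ (g k) (p k) μ0 hr0.le (hsum k) (hs k) (F k)
      (fun j => B j - μ0) hBj (ω * r) fun α A hA hα => ?_
    rw [ContinuousMap.norm_le _ (by positivity)]
    intro ξ
    rw [ContinuousMap.sum_apply]
    have hb : ∀ j, ‖(α j • F k j) ξ‖ ≤ ρ j ξ * (ω * r * A) := by
      intro j
      rw [ContinuousMap.smul_apply, hFa, smul_eq_mul, norm_mul, norm_mul, norm_mul,
        Complex.norm_real, Real.norm_of_nonneg (ρ.nonneg j ξ)]
      by_cases h0 : ρ j ξ = 0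
      · simp [h0]
      · have h1 : ‖B j k - b k ξ‖ ≤ ω := by
          rw [norm_sub_rev]
          exact (norm_le_pi_norm (B ξ - B j) k).trans (hρ3 j ξ h0).le
        have h2 := hfn ξ
        have h3 := ρ.nonneg j ξ
        calc ‖α j‖ * (ρ j ξ * ‖f ξ‖ * ‖B j k - b k ξ‖) ≤ A * (ρ j ξ * r * ω) := by
              gcongr
              exact hα j
          _ = _ := by ring
    refine (norm_sum_le _ _).trans ((Finset.sum_le_sum fun j _ => hb j).trans ?_)
    rw [← Finset.sum_mul]
    exact mul_le_of_le_one_left (by positivity) (hρ2 ξ)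
  have hlim : Tendsto (fun ω : ℝ => ω * (r * C)) (𝓝[>] 0) (𝓝 0) := by
    have : Tendsto (fun ω : ℝ => ω * (r * C)) (𝓝 0) (𝓝 (0 * (r * C))) :=
      (continuous_id.mul continuous_const).tendsto 0
    rw [zero_mul] at this
    exact this.mono_left nhdsWithin_le_nhds
  have h0 : ‖Ψ f y‖ ≤ 0 := ge_of_tendsto hlim (by
    filter_upwards [self_mem_nhdsWithin] with ω hω using key ω hω)
  simpa using h0

set_option maxHeartbeats 1000000 in
lemma main_model {X H K : Type*} [NormedAddCommGroup X] [NormedSpace ℂ X] [CompleteSpace X]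
    [NormedAddCommGroup H] [NormedSpace ℂ H]
    [TopologicalSpace K] [CompactSpace K] [T2Space K]
    (T : X →L[ℂ] X) (hT : ∃ M : ℝ, ∀ n : ℕ, ‖T ^ n‖ ≤ M)
    (U : H →L[ℂ] H) (Ψ : C(K, ℂ) →ₐ[ℂ] (H →L[ℂ] H)) (hΨn : ∀ f, ‖Ψ f‖ ≤ ‖f‖) (hΨc : Continuous Ψ)
    (z : C(K, ℂ)) (hK : ∀ ζ, ‖z ζ‖ = 1) (hΨz : Ψ z = U) (Q : X →L[ℂ] H)
    (hQ : ∀ x, Q (T x) = U (Q x))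
    (x : X) (a : ℕ → ℂ) (ha : Summable fun n : ℕ => ‖a n‖)
    (h : ∀ lam : ℂ, ‖lam‖ = 1 → ¬ LocallyRegular T x lam → (∑' m : ℕ, a m * lam ^ m) = 0) :
    Q ((∑' m : ℕ, a m • T ^ m) x) = 0 := by
  obtain ⟨M, hM⟩ := hT
  have hzn : ∀ m, ‖z ^ m‖ ≤ 1 := fun m => by
    rw [ContinuousMap.norm_le _ zero_le_one]
    intro ζ
    rw [ContinuousMap.pow_apply, norm_pow, hK, one_pow]
  -- the symbol of an ℓ¹ sequence
  let sym : (ℕ → ℂ) → C(K, ℂ) := fun c => ∑' m, c m • z ^ m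
  have hsumm : ∀ c : ℕ → ℂ, (Summable fun m => ‖c m‖) → Summable fun m => c m • z ^ m :=
    fun c hc => Summable.of_norm_bounded hc fun m => by
      rw [norm_smul]; exact mul_le_of_le_one_right (norm_nonneg _) (hzn m)
  have hsym : ∀ c : ℕ → ℂ, (Summable fun m => ‖c m‖) → ∀ ζ : K,
      sym c ζ = ∑' m, c m * (z ζ) ^ m := by
    intro c hc ζ
    have h1 := (hsumm c hc).hasSum
    have h2 := (ContinuousMap.evalCLM ℂ ζ).hasSum h1
    exact h2.tsum_eq.symm
  have hQpow : ∀ m w, Q ((T ^ m) w) = (U ^ m) (Q w) := by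
    intro m
    induction m with
    | zero => intro w; rfl
    | succ m ih =>
      intro w
      rw [pow_succ, pow_succ]
      change Q ((T ^ m) (T w)) = (U ^ m) (U (Q w))
      rw [ih, hQ]
  have hinter : ∀ c : ℕ → ℂ, (Summable fun m => ‖c m‖) → ∀ w,
      Q ((∑' m, c m • T ^ m) w) = Ψ (sym c) (Q w) := by
    intro c hc w
    have hTs : Summable fun m => c m • T ^ m :=
      Summable.of_norm_bounded (hc.mul_right M) fun m => by
        rw [norm_smul]; exact mul_le_mul_of_nonneg_left (hM m) (norm_nonneg _)
    have h1 : HasSum (fun m => Q ((c m • T ^ m) w)) (Q ((∑' m, c m • T ^ m) w)) :=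
      (Q.comp (ContinuousLinearMap.apply ℂ X w)).hasSum hTs.hasSum
    have h2 : HasSum (fun m => Ψ (c m • z ^ m)) (Ψ (sym c)) :=
      (hsumm c hc).hasSum.map Ψ hΨc
    have h3 : HasSum (fun m => Ψ (c m • z ^ m) (Q w)) (Ψ (sym c) (Q w)) :=
      (ContinuousLinearMap.apply ℂ H (Q w)).hasSum h2
    refine h1.unique ?_
    convert h3 using 2 with m
    rw [map_smul, map_pow, hΨz, _root_.smul_apply, _root_.smul_apply, map_smul, hQpow]
  rw [hinter a ha]
  -- the closed ideal
  let I : Ideal C(K, ℂ) :=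
    { carrier := {f | Ψ f (Q x) = 0}
      add_mem' := by
        intro f g hf hg
        have hf : Ψ f (Q x) = 0 := hf
        have hg : Ψ g (Q x) = 0 := hg
        change Ψ (f + g) (Q x) = 0
        rw [map_add, _root_.add_apply, hf, hg, add_zero]
      zero_mem' := by
        change Ψ 0 (Q x) = 0
        rw [map_zero]; rfl
      smul_mem' := by
        intro c f hf
        have hf : Ψ f (Q x) = 0 := hf
        change Ψ (c * f) (Q x) = 0
        rw [map_mul]
        change Ψ c (Ψ f (Q x)) = 0
        rw [hf, map_zero] }
  have hIc : IsClosed (I : Set C(K, ℂ)) :=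
    isClosed_eq ((ContinuousLinearMap.apply ℂ H (Q x)).continuous.comp hΨc) continuous_const
  have hmem : sym a ∈ I := by
    rw [← ContinuousMap.idealOfSet_ofIdeal_isClosed hIc, ContinuousMap.mem_idealOfSet]
    intro ζ hζ
    rw [Set.mem_compl_iff, ContinuousMap.mem_setOfIdeal] at hζ
    rw [hsym a ha]
    refine h (z ζ) (hK ζ) fun hreg => hζ ?_
    obtain ⟨n, c, hc, Ω, hΩ, hmem, g, hg, hgx⟩ := hreg
    obtain ⟨f, hf0, hf⟩ := local_vanish Ψ hΨn (fun k => sym (c k)) ζ Ω hΩ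
      (by simpa only [hsym _ (hc _)] using hmem) (fun k μ => Q (g k μ))
      (fun k => Q.comp_analyticOnNhd (hg k)) (Q x) (fun μ hμ => by
        rw [← hgx μ hμ, map_sum]
        refine Finset.sum_congr rfl fun k _ => ?_
        rw [map_sub, map_smul, hinter _ (hc k)])
    exact ⟨f, hf, hf0⟩
  exact hmem

set_option maxHeartbeats 1000000 in
lemma main_unitary {X H : Type*} [NormedAddCommGroup X] [NormedSpace ℂ X] [CompleteSpace X]
    [NormedAddCommGroup H] [InnerProductSpace ℂ H] [CompleteSpace H]
    (T : X →L[ℂ] X) (hT : ∃ M : ℝ, ∀ n : ℕ, ‖T ^ n‖ ≤ M)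
    (U : H →L[ℂ] H) (hU : U ∈ unitary (H →L[ℂ] H)) (Q : X →L[ℂ] H)
    (hQ : ∀ x, Q (T x) = U (Q x))
    (x : X) (a : ℕ → ℂ) (ha : Summable fun n : ℕ => ‖a n‖)
    (h : ∀ lam : ℂ, ‖lam‖ = 1 → ¬ LocallyRegular T x lam → (∑' m : ℕ, a m * lam ^ m) = 0) :
    Q ((∑' m : ℕ, a m • T ^ m) x) = 0 := by
  have hN : IsStarNormal U := isStarNormal_of_mem_unitary hU
  let K := spectrum ℂ U
  have hK : ∀ ζ : K, ‖(ζ : ℂ)‖ = 1 := fun ζ => by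
    simpa using spectrum.subset_circle_of_unitary hU ζ.2
  let Ψ : C(K, ℂ) →ₐ[ℂ] (H →L[ℂ] H) := (cfcHom (R := ℂ) hN).toAlgHom
  have hΨn : ∀ f, ‖Ψ f‖ ≤ ‖f‖ := fun f => (norm_cfcHom (𝕜 := ℂ) U f hN).le
  have hΨc : Continuous Ψ := cfcHom_continuous (R := ℂ) hN
  let z : C(K, ℂ) := ⟨fun ζ => ζ, continuous_subtype_val⟩
  have hΨz : Ψ z = U := cfcHom_id (R := ℂ) hN
  exact main_model T hT U Ψ hΨn hΨc z (fun ζ => hK ζ) hΨz Q hQ x a ha h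

/-- ℤ₊-instance of Theorem 5.1: if `T` is power-bounded on a complex Hilbert space,
`x ∈ X`, `a ∈ ℓ¹(ℕ)`, and `â(λ) = 0` for every `λ` in the unitary local spectrum
`Spu(T;x)` (the set of `λ ∈ 𝕋` which are not locally regular at `x`), then
`‖Tⁿ â(T) x‖ → 0`. -/
theorem stmt_15 {X : Type*} [NormedAddCommGroup X] [InnerProductSpace ℂ X] [CompleteSpace X]
    (T : X →L[ℂ] X) (hT : ∃ M : ℝ, ∀ n : ℕ, ‖T ^ n‖ ≤ M)
    (x : X) (a : ℕ → ℂ) (ha : Summable fun n : ℕ => ‖a n‖)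
    (h : ∀ lam : ℂ, ‖lam‖ = 1 → ¬ LocallyRegular T x lam → (∑' m : ℕ, a m * lam ^ m) = 0) :
    Tendsto (fun n : ℕ => ‖(T ^ n) ((∑' m : ℕ, a m • T ^ m) x)‖) atTop (nhds 0) := by
  obtain ⟨U, Q, hU, hQ, hlim⟩ := exists_unitary_model T hT
  exact hlim _ (main_unitary T hT U hU Q hQ x a ha h)
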